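/- Assume the coordinate ordering condition. Then for every tuple P = (p_d; …; p_1) ∈ P_{1,…,d} and every 1 ≤ n ≤ d, the coefficient C_n^{(d)}(P) is strictly positive. -/

import Mathlib

open Real Finset Filter

noncomputable section

/-- Index sets of a Gatzouras–Lalley structure. -/
def glIdx (Nf : List ℕ → ℕ) : ℕ → Finset (List ℕ)
  | 0 => {[]}
  | n + 1 => (glIdx Nf n).biUnion fun u =>
      (Finset.range (Nf u)).image fun j => u ++ [j + 1]

/-- Entropy of a vector `p` on index set `I`. -/
def glEnt (I : Finset (List ℕ)) (p : List ℕ → ℝ) : ℝ :=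
  -∑ i ∈ I, p i * Real.log (p i)

/-- Lyapunov exponent `χ_ℓ(p)` for `p` on index set `I`. -/
def glLyap (lam : List ℕ → ℝ) (I : Finset (List ℕ)) (ℓ : ℕ) (p : List ℕ → ℝ) : ℝ :=
  -∑ i ∈ I, p i * Real.log (lam (i.take ℓ))

def IsProbVec (I : Finset (List ℕ)) (p : List ℕ → ℝ) : Prop :=
  (∀ i ∈ I, 0 ≤ p i) ∧ ∑ i ∈ I, p i = 1

/-- `glCaux d χ k = C^{(d)}_{d-k}`, defined by downward recursion. -/
def glCaux (d : ℕ) (chi : ℕ → ℕ → ℝ) : ℕ → ℝ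
  | k => (1 - ∑ j ∈ (Finset.range k).attach,
        glCaux d chi j.1 * chi (d - k) (d - j.1)) / chi (d - k) (d - k)
decreasing_by exact Finset.mem_range.mp j.2

/-- The coefficient `C_n^{(d)}(P)`. -/
def glC (d : ℕ) (lam : List ℕ → ℝ) (Nf : List ℕ → ℕ) (P : ℕ → List ℕ → ℝ) (n : ℕ) : ℝ :=
  glCaux d (fun a m => glLyap lam (glIdx Nf m) a (P m)) (d - n)

/-- Smallest number of sets of diameter at most `δ` needed to cover `Λ`. -/
def coverNum {E : Type*} [EMetricSpace E] (Λ : Set E) (δ : ℝ) : ℕ :=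
  sInf {m : ℕ | ∃ U : Fin m → Set E,
    (∀ k, EMetric.diam (U k) ≤ ENNReal.ofReal δ) ∧ Λ ⊆ ⋃ k, U k}

/-- The affine map `S_i` of a Gatzouras–Lalley system. -/
def glMap (d : ℕ) (lam t : List ℕ → ℝ) (i : List ℕ) (x : EuclideanSpace ℝ (Fin d)) :
    EuclideanSpace ℝ (Fin d) :=
  WithLp.toLp 2 fun k => lam (i.take ((k : ℕ) + 1)) * x k + t (i.take ((k : ℕ) + 1))

def openCube (d : ℕ) : Set (EuclideanSpace ℝ (Fin d)) := {x | ∀ k, x k ∈ Set.Ioo (0:ℝ) 1}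

def closedCube (d : ℕ) : Set (EuclideanSpace ℝ (Fin d)) := {x | ∀ k, x k ∈ Set.Icc (0:ℝ) 1}


theorem gl_len (Nf : List ℕ → ℕ) : ∀ n, ∀ i ∈ glIdx Nf n, i.length = n := by
  intro n
  induction n with
  | zero => intro i hi; simp [glIdx] at hi; simp [hi]
  | succ n ih =>
    intro i hi
    simp only [glIdx, Finset.mem_biUnion, Finset.mem_image] at hi
    obtain ⟨u, hu, j, hj, rfl⟩ := hi
    simp [ih u hu]

theorem gl_take (Nf : List ℕ → ℕ) (a : ℕ) : ∀ n, a ≤ n → ∀ i ∈ glIdx Nf n,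
    i.take a ∈ glIdx Nf a := by
  intro n hn
  induction n, hn using Nat.le_induction with
  | base =>
    intro i hi
    rwa [List.take_of_length_le (gl_len Nf a i hi).le]
  | succ n hn ih =>
    intro i hi
    simp only [glIdx, Finset.mem_biUnion, Finset.mem_image] at hi
    obtain ⟨u, hu, j, hj, rfl⟩ := hi
    rw [List.take_append_of_le_length (by rw [gl_len Nf n u hu]; exact hn)]
    exact ih u hu

theorem gl_ext (Nf : List ℕ → ℕ) (d m : ℕ) (hmd : m ≤ d)
    (hNf : ∀ n < d, ∀ u ∈ glIdx Nf n, 1 ≤ Nf u) (i : List ℕ) (hi : i ∈ glIdx Nf m) :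
    ∃ i' ∈ glIdx Nf d, i'.take m = i := by
  induction d, hmd using Nat.le_induction with
  | base => exact ⟨i, hi, List.take_of_length_le (gl_len Nf m i hi).le⟩
  | succ n hn ih =>
    obtain ⟨u, hu, h⟩ := ih (fun k hk => hNf k (by omega))
    refine ⟨u ++ [0 + 1], ?_, ?_⟩
    · simp only [glIdx, Finset.mem_biUnion, Finset.mem_image]
      exact ⟨u, hu, 0, Finset.mem_range.mpr (hNf n (by omega) u hu), rfl⟩
    · rw [List.take_append_of_le_length (by rw [gl_len Nf n u hu]; exact hn), h]

theorem gl_sum_lt (I : Finset (List ℕ)) (p f g : List ℕ → ℝ) (hp : IsProbVec I p)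
    (h : ∀ i ∈ I, f i < g i) : ∑ i ∈ I, p i * f i < ∑ i ∈ I, p i * g i := by
  obtain ⟨h0, h1⟩ := hp
  apply Finset.sum_lt_sum
  · intro i hi
    exact mul_le_mul_of_nonneg_left (h i hi).le (h0 i hi)
  · have : ∃ i ∈ I, 0 < p i := by
      by_contra! hc
      have := Finset.sum_nonpos hc
      linarith
    obtain ⟨i, hi, hpi⟩ := this
    exact ⟨i, hi, mul_lt_mul_of_pos_left (h i hi) hpi⟩

theorem glCaux_pos (d : ℕ) (chi : ℕ → ℕ → ℝ)
    (hpos : ∀ a, 1 ≤ a → a ≤ d → 0 < chi a a)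
    (hlt : ∀ a m, 1 ≤ a → a < m → m ≤ d → chi a m < chi (a + 1) m) :
    ∀ k, k < d → (∀ j ≤ k, 0 < glCaux d chi j) ∧
      ∑ j ∈ Finset.range (k + 1), glCaux d chi j * chi (d - k) (d - j) = 1 := by
  have hrec : ∀ k, glCaux d chi k = (1 - ∑ j ∈ Finset.range k,
      glCaux d chi j * chi (d - k) (d - j)) / chi (d - k) (d - k) := by
    intro k
    rw [glCaux, Finset.sum_attach (Finset.range k)
      (fun j => glCaux d chi j * chi (d - k) (d - j))]
  have one : ∀ k, k < d →
      ∑ j ∈ Finset.range (k + 1), glCaux d chi j * chi (d - k) (d - j) = 1 := by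
    intro k hk
    have hp := hpos (d - k) (by omega) (by omega)
    rw [Finset.sum_range_succ]
    have h := hrec k
    rw [eq_div_iff hp.ne'] at h
    rw [h]; ring
  intro k
  induction k with
  | zero =>
    intro hk
    refine ⟨?_, one 0 hk⟩
    intro j hj
    obtain rfl : j = 0 := by omega
    rw [hrec]
    have := hpos d (by omega) le_rfl
    simpa using this
  | succ k ih =>
    intro hk
    obtain ⟨h1, h2⟩ := ih (by omega)
    refine ⟨?_, one _ hk⟩
    intro j hj
    rcases Nat.lt_or_ge k j with hkj | hkj
    · obtain rfl : j = k + 1 := by omega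
      rw [hrec]
      refine div_pos (sub_pos.mpr ?_) (hpos _ (by omega) (by omega))
      rw [← h2]
      apply Finset.sum_lt_sum_of_nonempty ⟨0, by simp⟩
      intro j hj
      have hj' := Finset.mem_range.mp hj
      apply mul_lt_mul_of_pos_left _ (h1 j (by omega))
      have := hlt (d - (k + 1)) (d - j) (by omega) (by omega) (by omega)
      rwa [show d - (k + 1) + 1 = d - k by omega] at this
    · exact h1 j hkj

/-- Under the coordinate ordering condition, all the coefficients
`C_n^{(d)}(P)` are strictly positive. -/
theorem C_coefficients_pos
    (d : ℕ) (hd : 1 ≤ d)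
    (Nf : List ℕ → ℕ) (hN : 2 ≤ Nf [])
    (hNf : ∀ n < d, ∀ u ∈ glIdx Nf n, 1 ≤ Nf u)
    (lam : List ℕ → ℝ)
    (hlam : ∀ n, 1 ≤ n → n ≤ d → ∀ i ∈ glIdx Nf n, lam i ∈ Set.Ioo (0:ℝ) 1)
    (horder : ∀ i ∈ glIdx Nf d, ∀ ℓ, 1 ≤ ℓ → ℓ < d →
      lam (i.take (ℓ + 1)) < lam (i.take ℓ))
    (P : ℕ → List ℕ → ℝ)
    (hP : ∀ n, 1 ≤ n → n ≤ d → IsProbVec (glIdx Nf n) (P n)) :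
    ∀ n, 1 ≤ n → n ≤ d → 0 < glC d lam Nf P n := by
  intro n hn hnd
  unfold glC
  refine (glCaux_pos d _ ?_ ?_ (d - n) (by omega)).1 _ le_rfl
  · intro a ha had
    have := gl_sum_lt (glIdx Nf a) (P a) (fun i => Real.log (lam (i.take a))) (fun _ => 0)
      (hP a ha had) (fun i hi => by
        have h := hlam a ha had _ (gl_take Nf a a le_rfl i hi)
        exact Real.log_neg h.1 h.2)
    simp only [mul_zero, Finset.sum_const_zero] at this
    simp only [glLyap]
    linarith
  · intro a m ha ham hmd
    simp only [glLyap]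
    apply neg_lt_neg
    apply gl_sum_lt _ _ (fun i => Real.log (lam (i.take (a + 1))))
      (fun i => Real.log (lam (i.take a))) (hP m (by omega) hmd)
    intro i hi
    apply Real.log_lt_log (hlam (a + 1) (by omega) (by omega) _ (gl_take Nf _ m ham i hi)).1
    obtain ⟨i', hi', rfl⟩ := gl_ext Nf d m hmd hNf i hi
    have := horder i' hi' a ha (by omega)
    rw [List.take_take, List.take_take, min_eq_left (by omega : a + 1 ≤ m),
      min_eq_left ham.le]
    exact this
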